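/- arXiv:1912.10710 — 2 statements merged into one kernel-verified Lean document; each statement's English description precedes it below -/
import Mathlib

section
/- Let $K$ be any field and let $F = K((t))$ be the field of formal Laurent series over $K$. Let $W$ be an elliptic curve over $F$ (a Weierstrass curve over $F$ with nonzero discriminant). Then the rank of the group $W(F)$ of $F$-rational points of $W$ is infinite, i.e. the $\mathbb{Q}$-vector space $W(F) \otimes_{\mathbb{Z}} \mathbb{Q}$ is infinite-dimensional. -/
open TensorProduct

/-!
An uncountable abelian group whose `n`-torsion is countable for every `n ≥ 1` has uncountable rank,
because the kernel of `G → ℚ ⊗ G` is countable.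

There are uncountably many points: substituting `x = u / z²`, `y = -u / z³` into the Weierstrass
equation gives a cubic in `u` which, for small `z`, reduces to `u³ - u²`, so Hensel's lemma lifts
the simple root `u = 1` and yields a point with local parameter `-x / y = z`.

The torsion is countable: the curve is defined over a countable subfield `k`. Suppose that a point
of order `p` had a coordinate `x` transcendental over `k`. Automorphisms over `k` of the algebraic
closure act transitively on transcendental elements, so every point with transcendental `x` would
be killed by `p`. These are all but countably many points, and a subgroup of an uncountable group
with countable complement is the whole group, so `p` would kill the curve. But over an
algebraically closed field one of the primes `2`, `3` has both a nonzero torsion point and a point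
it does not kill, which rules this out for every `p`.
-/

open Cardinal Polynomial WeierstrassCurve WeierstrassCurve.Affine

section CountableTorsion

variable {G H : Type*} [AddCommGroup G] [AddCommGroup H]

theorem countable_preimage_of_countable_ker (f : G →+ H) (hf : (f.ker : Set G).Countable)
    {s : Set H} (hs : s.Countable) : (f ⁻¹' s).Countable := by
  rw [← Set.biUnion_preimage_singleton]
  refine hs.biUnion fun b _ ↦ ?_
  rcases (f ⁻¹' {b}).eq_empty_or_nonempty with hempty | ⟨a, rfl⟩
  · exact hempty ▸ Set.countable_empty
  · refine (hf.image (a + ·)).mono fun g (hg : f g = f a) ↦ ?_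
    exact ⟨g - a, by simp [hg], add_sub_cancel a g⟩

theorem countable_nsmul_eq_zero_of_prime
    (hG : ∀ p : ℕ, p.Prime → {g : G | p • g = 0}.Countable) {n : ℕ} (hn : n ≠ 0) :
    {g : G | n • g = 0}.Countable := by
  induction n using induction_on_primes with
  | zero => exact absurd rfl hn
  | one => simp
  | prime_mul p a hp ih =>
    refine (countable_preimage_of_countable_ker (nsmulAddMonoidHom (α := G) p) (hG p hp)
      (ih (right_ne_zero_of_mul hn))).mono fun g (hg : (p * a) • g = 0) ↦ ?_
    rwa [mul_nsmul] at hg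

theorem exists_nsmul_eq_zero_of_one_tmul_eq_zero {g : G} (hg : (1 : ℚ) ⊗ₜ[ℤ] g = 0) :
    ∃ n : ℕ, n ≠ 0 ∧ n • g = 0 := by
  have : IsLocalizedModule (nonZeroDivisors ℤ) (TensorProduct.mk ℤ ℚ G 1) :=
    (isLocalizedModule_iff_isBaseChange (nonZeroDivisors ℤ) ℚ _).mpr
      (TensorProduct.isBaseChange ℤ G ℚ)
  obtain ⟨c, hc⟩ :=
    (IsLocalizedModule.eq_zero_iff (nonZeroDivisors ℤ) (TensorProduct.mk ℤ ℚ G 1)).mp hg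
  exact ⟨(c : ℤ).natAbs, Int.natAbs_ne_zero.mpr (nonZeroDivisors.coe_ne_zero c),
    natAbs_nsmul_eq_zero.mpr hc⟩

theorem aleph0_lt_rank_of_countable_torsion [Uncountable G]
    (hG : ∀ n : ℕ, n ≠ 0 → {g : G | n • g = 0}.Countable) :
    ℵ₀ < Module.rank ℚ (ℚ ⊗[ℤ] G) := by
  by_contra! hrank
  let b := Module.Free.chooseBasis ℚ (ℚ ⊗[ℤ] G)
  have : Countable (Module.Free.ChooseBasisIndex ℚ (ℚ ⊗[ℤ] G)) :=
    mk_le_aleph0_iff.mp (b.mk_eq_rank''.trans_le hrank)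
  have : Countable (ℚ ⊗[ℤ] G) := b.repr.injective.countable
  let toTensor : G →+ ℚ ⊗[ℤ] G := (TensorProduct.mk ℤ ℚ G 1).toAddMonoidHom
  have hker : (toTensor.ker : Set G).Countable := by
    refine (Set.countable_iUnion fun n : {n : ℕ // n ≠ 0} ↦ hG n n.2).mono fun g hg ↦ ?_
    obtain ⟨n, hn, hng⟩ := exists_nsmul_eq_zero_of_one_tmul_eq_zero hg
    exact Set.mem_iUnion.mpr ⟨⟨n, hn⟩, hng⟩
  exact Set.not_countable_univ
    (countable_preimage_of_countable_ker toTensor hker Set.countable_univ)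

theorem eq_top_of_countable_compl [Uncountable G] (A : AddSubgroup G)
    (hA : (A : Set G)ᶜ.Countable) : A = ⊤ := by
  refine A.eq_top_iff'.mpr fun g ↦ by_contra fun hg ↦ ?_
  have hcoset : (g + ·) '' (A : Set G) ⊆ (A : Set G)ᶜ := by
    rintro _ ⟨a, ha, rfl⟩ hga
    exact hg ((A.add_mem_cancel_right ha).mp hga)
  have hcountable : (A : Set G).Countable :=
    Set.countable_of_injective_of_countable_image (add_right_injective g).injOn
      (hA.mono hcoset)
  exact Set.not_countable_univ (Set.union_compl_self (A : Set G) ▸ hcountable.union hA)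

end CountableTorsion

section TranscendenceBasis

theorem exists_algEquiv_of_isTranscendenceBasis {k K L ι : Type*} [CommRing k] [Field K] [Field L]
    [Algebra k K] [Algebra k L] [IsAlgClosed K] [IsAlgClosed L] {v : ι → K} {w : ι → L}
    (hv : IsTranscendenceBasis k v) (hw : IsTranscendenceBasis k w) :
    ∃ σ : K ≃ₐ[k] L, ∀ i, σ (v i) = w i := by
  have := IsAlgClosed.isAlgClosure_of_transcendence_basis v hv
  have := IsAlgClosed.isAlgClosure_of_transcendence_basis w hw
  let e : Algebra.adjoin k (Set.range v) ≃ₐ[k] Algebra.adjoin k (Set.range w) :=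
    hv.1.aevalEquiv.symm.trans hw.1.aevalEquiv
  let τ : K ≃+* L := IsAlgClosure.equivOfEquiv K L e.toRingEquiv
  have hτ (a) : τ (algebraMap _ K a) = algebraMap _ L (e a) :=
    IsAlgClosure.equivOfEquiv_algebraMap K L e.toRingEquiv a
  refine ⟨AlgEquiv.ofRingEquiv (f := τ) fun c ↦ ?_, fun i ↦ ?_⟩
  · simpa using! hτ (algebraMap k _ c)
  · simpa [e] using hτ (hv.1.aevalEquiv (MvPolynomial.X i))

variable {k L : Type*} [Field k] [Field L] [Algebra k L] {x y : L}

theorem exists_isTranscendenceBasis_mem (hx : Transcendental k x) :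
    ∃ s : Set L, x ∈ s ∧ IsTranscendenceBasis k ((↑) : s → L) := by
  have hindep : AlgebraicIndepOn k id ({x} : Set L) :=
    (algebraicIndependent_singleton_iff (⟨x, rfl⟩ : ({x} : Set L))).mpr hx
  obtain ⟨s, hxs, hs⟩ := exists_isTranscendenceBasis_superset hindep
  exact ⟨s, hxs rfl, hs⟩

theorem exists_algEquiv_apply_eq_of_transcendental [IsAlgClosed L]
    (hx : Transcendental k x) (hy : Transcendental k y) : ∃ σ : L ≃ₐ[k] L, σ x = y := by
  classical
  obtain ⟨s, hxs, hs⟩ := exists_isTranscendenceBasis_mem hx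
  obtain ⟨t, hyt, ht⟩ := exists_isTranscendenceBasis_mem hy
  obtain ⟨e⟩ := Cardinal.eq.mp (hs.cardinalMk_eq ht)
  let e' : s ≃ t := e.trans (Equiv.swap (e ⟨x, hxs⟩) ⟨y, hyt⟩)
  have he' : e' ⟨x, hxs⟩ = ⟨y, hyt⟩ := by simp [e']
  obtain ⟨σ, hσ⟩ := exists_algEquiv_of_isTranscendenceBasis hs (ht.comp_equiv e')
  exact ⟨σ, by simpa [he'] using hσ ⟨x, hxs⟩⟩

end TranscendenceBasis

section SmallTorsion

variable {F : Type*} [Field F] {W : Affine F} {x y : F}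

theorem eval_Ψ₃_ne_zero_of_Y_eq (h : W.Nonsingular x y) (hy : y = W.negY x y) :
    W.Ψ₃.eval x ≠ 0 := by
  have hy0 : 2 * y + W.a₁ * x + W.a₃ = 0 := by rw [negY] at hy; linear_combination hy
  have hns : W.a₁ * y - (3 * x ^ 2 + 2 * W.a₂ * x + W.a₄) ≠ 0 := by
    simpa [hy0] using ((nonsingular_iff' ..).mp h).2
  refine fun hΨ ↦ hns (pow_eq_zero_iff two_ne_zero |>.mp ?_)
  simp only [Ψ₃, b₂, b₄, b₆, b₈, eval_add, eval_mul, eval_pow, eval_C, eval_X, eval_ofNat] at hΨ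
  linear_combination -hΨ + ((W.a₂ + 3 * x) * (2 * y + W.a₁ * x + W.a₃)
    - W.a₁ * (3 * x ^ 2 + 2 * W.a₂ * x + W.a₄ - W.a₁ * y)) * hy0
    - (12 * x + 4 * W.a₂ + W.a₁ ^ 2) * (equation_iff' ..).mp h.1

variable [DecidableEq F]

theorem two_nsmul_some_eq_zero_iff (h : W.Nonsingular x y) :
    2 • Point.some x y h = 0 ↔ W.Ψ₂Sq.eval x = 0 := by
  have hΨ : W.Ψ₂Sq.eval x = (y - W.negY x y) ^ 2 := by
    simp only [Ψ₂Sq, negY, b₂, b₄, b₆, eval_add, eval_mul, eval_pow, eval_C, eval_X]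
    linear_combination -4 * (equation_iff' ..).mp h.1
  rw [two_nsmul, hΨ, pow_eq_zero_iff two_ne_zero, sub_eq_zero]
  refine ⟨fun h2 ↦ by_contra fun hy ↦ ?_, Point.add_self_of_Y_eq⟩
  exact Point.some_ne_zero _ (Point.add_self_of_Y_ne hy ▸ h2)

theorem three_nsmul_some_eq_zero_iff_addX_eq (h : W.Nonsingular x y) (hy : y ≠ W.negY x y) :
    3 • Point.some x y h = 0 ↔ W.addX x x (W.slope x x y y) = x := by
  have hdouble := Point.add_self_of_Y_ne (h₁ := h) hy
  rw [Point.X_eq_iff (h₁ := nonsingular_add h h fun hxy ↦ hy hxy.right) (h₂ := h), ← hdouble,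
    succ_nsmul, two_nsmul, eq_neg_iff_add_eq_zero]
  exact (or_iff_right (by simp)).symm

theorem addX_slope_self_sub_self (h : W.Equation x y) (hy : y ≠ W.negY x y) :
    W.addX x x (W.slope x x y y) - x = -W.Ψ₃.eval x / (y - W.negY x y) ^ 2 := by
  have hd : y - W.negY x y ≠ 0 := sub_ne_zero.mpr hy
  rw [slope_of_Y_ne rfl hy, addX, eq_div_iff (pow_ne_zero 2 hd)]
  field_simp
  simp only [Ψ₃, negY, b₂, b₄, b₆, b₈, eval_add, eval_mul, eval_pow, eval_C, eval_X, eval_ofNat]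
  linear_combination -(12 * x + 4 * W.a₂ + W.a₁ ^ 2) * (equation_iff' ..).mp h

theorem three_nsmul_some_eq_zero_iff (h : W.Nonsingular x y) :
    3 • Point.some x y h = 0 ↔ W.Ψ₃.eval x = 0 := by
  by_cases hy : y = W.negY x y
  · have htriple : 3 • Point.some x y h = Point.some x y h := by
      rw [succ_nsmul, two_nsmul, Point.add_self_of_Y_eq hy, zero_add]
    exact iff_of_false (htriple.trans_ne (Point.some_ne_zero h)) (eval_Ψ₃_ne_zero_of_Y_eq h hy)
  · rw [three_nsmul_some_eq_zero_iff_addX_eq h hy, ← sub_eq_zero,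
      addX_slope_self_sub_self h.1 hy, div_eq_zero_iff, neg_eq_zero, or_iff_left]
    exact pow_ne_zero 2 (sub_ne_zero.mpr hy)

end SmallTorsion

section AlgClosed

variable {L : Type*} [Field L] [IsAlgClosed L] (W : Affine L) [W.IsElliptic]

theorem exists_nonsingular_of_isAlgClosed (x : L) : ∃ y, W.Nonsingular x y := by
  let f : L[X] := X ^ 2 + C (W.a₁ * x + W.a₃) * X - C (x ^ 3 + W.a₂ * x ^ 2 + W.a₄ * x + W.a₆)
  have hf : f.degree = 2 := by simp only [f]; compute_degree!
  obtain ⟨y, hy⟩ := IsAlgClosed.exists_root f (hf ▸ two_ne_zero)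
  refine ⟨y, equation_iff_nonsingular.mp ((equation_iff' ..).mpr ?_)⟩
  simp only [f, IsRoot.def, eval_sub, eval_add, eval_pow, eval_X, eval_mul, eval_C] at hy
  linear_combination hy

variable [DecidableEq L]

theorem exists_torsion_and_exists_nontorsion_of_eval {q : ℕ} {f : L[X]} (hf : 0 < f.natDegree)
    (hqf : ∀ x y (h : W.Nonsingular x y), q • Point.some x y h = 0 ↔ f.eval x = 0) :
    (∃ P : W.Point, P ≠ 0 ∧ q • P = 0) ∧ ∃ P : W.Point, q • P ≠ 0 := by
  obtain ⟨x₀, hx₀⟩ := IsAlgClosed.exists_root f (natDegree_pos_iff_degree_pos.mp hf).ne'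
  obtain ⟨x₁, hx₁⟩ := exists_eval_ne_zero_of_natDegree_lt_card f (ne_zero_of_natDegree_gt hf)
    ((natCast_lt_aleph0).trans_le (aleph0_le_mk L))
  obtain ⟨y₀, h₀⟩ := exists_nonsingular_of_isAlgClosed W x₀
  obtain ⟨y₁, h₁⟩ := exists_nonsingular_of_isAlgClosed W x₁
  exact ⟨⟨.some x₀ y₀ h₀, Point.some_ne_zero h₀, (hqf ..).mpr hx₀⟩,
    .some x₁ y₁ h₁, (hqf ..).not.mpr hx₁⟩

theorem exists_prime_torsion_and_nontorsion : ∃ q : ℕ, q.Prime ∧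
    (∃ P : W.Point, P ≠ 0 ∧ q • P = 0) ∧ ∃ P : W.Point, q • P ≠ 0 := by
  by_cases h2 : (2 : L) = 0
  · have h3 : (3 : L) ≠ 0 := fun h3 ↦ one_ne_zero (by linear_combination h3 - h2 : (1 : L) = 0)
    exact ⟨3, Nat.prime_three, exists_torsion_and_exists_nontorsion_of_eval W
      (W.natDegree_Ψ₃_pos h3) fun _ _ ↦ three_nsmul_some_eq_zero_iff⟩
  · have h4 : (4 : L) ≠ 0 := by simpa [show (4 : L) = 2 ^ 2 by norm_num] using h2
    exact ⟨2, Nat.prime_two, exists_torsion_and_exists_nontorsion_of_eval W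
      (W.natDegree_Ψ₂Sq_pos h4) fun _ _ ↦ two_nsmul_some_eq_zero_iff⟩

theorem exists_prime_nsmul_ne_zero {p : ℕ} (hp : p.Prime) : ∃ P : W.Point, p • P ≠ 0 := by
  obtain ⟨q, hq, ⟨T, hT, hqT⟩, P, hP⟩ := exists_prime_torsion_and_nontorsion W
  rcases eq_or_ne p q with rfl | hpq
  · exact ⟨P, hP⟩
  · refine ⟨T, fun hpT ↦ hT ?_⟩
    have hcoprime : p.gcd q = 1 := (Nat.coprime_primes hp hq).mpr hpq
    have horder : addOrderOf T ∣ p.gcd q :=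
      Nat.dvd_gcd (addOrderOf_dvd_of_nsmul_eq_zero hpT) (addOrderOf_dvd_of_nsmul_eq_zero hqT)
    rwa [hcoprime, Nat.dvd_one, AddMonoid.addOrderOf_eq_one_iff] at horder

end AlgClosed

section CountableTorsionPoints

-- At the point at infinity `xRep` is `![1, 0]`, so that point counts as having algebraic `x`.
theorem countable_xRep_zero_mem {F : Type*} [Field F] (W : Affine F) {S : Set F}
    (hS : S.Countable) : {P : W.Point | P.xRep 0 ∈ S}.Countable := by
  have hfiber (v : Fin 2 → F) : (Point.xRep (W' := W) ⁻¹' {v}).Countable := by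
    rcases (Point.xRep (W' := W) ⁻¹' {v}).eq_empty_or_nonempty with hempty | ⟨P, rfl⟩
    · exact hempty ▸ Set.countable_empty
    · refine (Set.toFinite {P, -P}).countable.mono fun Q hQ ↦ ?_
      exact Point.xRep_eq_xRep_iff.mp hQ
  have hvalues : (Set.image2 (fun x z ↦ ![x, z]) S {0, 1}).Countable :=
    hS.image2 (Set.toFinite _).countable _
  refine (hvalues.biUnion fun v _ ↦ hfiber v).mono ?_
  rintro (_ | ⟨x, y, h⟩) hP
  · exact Set.mem_biUnion (Set.mem_image2_of_mem hP (Or.inl rfl)) rfl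
  · exact Set.mem_biUnion (Set.mem_image2_of_mem hP (Or.inr rfl)) rfl

section BaseField

variable {k F L : Type*} [Field k] [Field F] [Field L] [Algebra k F] [Algebra k L]
  (W : WeierstrassCurve k)

theorem xRep_zero_map [DecidableEq F] [DecidableEq L] (σ : F →ₐ[k] L) (P : (W⁄F).Point) :
    (Point.map σ P).xRep 0 = σ (P.xRep 0) := by
  rcases P with _ | ⟨x, y, h⟩
  · exact (map_one σ).symm
  · rfl

variable {W}

theorem exists_map_eq_or_map_eq_neg_of_transcendental [IsAlgClosed L] [DecidableEq L]
    {P Q : (W⁄L).Point} (hP : Transcendental k (P.xRep 0)) (hQ : Transcendental k (Q.xRep 0)) :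
    ∃ σ : L →ₐ[k] L, Point.map σ P = Q ∨ Point.map σ P = -Q := by
  obtain ⟨σ, hσ⟩ := exists_algEquiv_apply_eq_of_transcendental hP hQ
  rcases P with _ | ⟨x, y, h⟩
  · exact absurd isAlgebraic_one hP
  rcases Q with _ | ⟨x', y', h'⟩
  · exact absurd isAlgebraic_one hQ
  exact ⟨σ, Point.X_eq_iff.mp hσ⟩

theorem isAlgebraic_xRep_of_prime_nsmul_eq_zero [IsAlgClosed L] [DecidableEq L] [Countable k]
    [W.IsElliptic] [Uncountable (W⁄L).Point] {p : ℕ} (hp : p.Prime) {P : (W⁄L).Point}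
    (hpP : p • P = 0) : IsAlgebraic k (P.xRep 0) := by
  by_contra hP
  let torsion : AddSubgroup (W⁄L).Point := (nsmulAddMonoidHom p).ker
  have hgeneric (Q : (W⁄L).Point) (hQ : Transcendental k (Q.xRep 0)) : p • Q = 0 := by
    obtain ⟨σ, hσ⟩ := exists_map_eq_or_map_eq_neg_of_transcendental hP hQ
    have hpσ : p • Point.map σ P = 0 := by rw [← map_nsmul, hpP, Point.map_zero]
    rcases hσ with hσ | hσ <;> simpa [hσ] using hpσ
  have hcompl : (torsion : Set (W⁄L).Point)ᶜ.Countable :=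
    (countable_xRep_zero_mem (W⁄L) (Algebraic.countable k L)).mono fun Q hQ ↦
      by_contra fun hQ' ↦ hQ (hgeneric Q hQ')
  have : (W⁄L).IsElliptic := inferInstanceAs (W.map (algebraMap k L)).IsElliptic
  obtain ⟨Q, hQ⟩ := exists_prime_nsmul_ne_zero (W⁄L) hp
  exact hQ (eq_top_of_countable_compl torsion hcompl ▸ AddSubgroup.mem_top Q :)

variable (F) in
theorem countable_prime_nsmul_eq_zero_baseChange [DecidableEq F] [Countable k] [W.IsElliptic]
    {p : ℕ} (hp : p.Prime) : {P : (W⁄F).Point | p • P = 0}.Countable := by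
  classical
  by_cases hF : Countable (W⁄F).Point
  · exact Set.to_countable _
  rw [not_countable_iff] at hF
  let toClosure : F →ₐ[k] AlgebraicClosure F := IsScalarTower.toAlgHom k F (AlgebraicClosure F)
  have : Uncountable (W⁄(AlgebraicClosure F)).Point :=
    (Point.map_injective (W' := W) toClosure).uncountable
  refine (countable_xRep_zero_mem (W⁄F) (Algebraic.countable k F)).mono fun P hP ↦ ?_
  have hmap : p • Point.map toClosure P = 0 := by
    rw [← map_nsmul, show p • P = 0 from hP, Point.map_zero]
  have halg := isAlgebraic_xRep_of_prime_nsmul_eq_zero hp hmap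
  rwa [xRep_zero_map, isAlgebraic_algHom_iff _ toClosure.injective] at halg

end BaseField

/-- The family `a₁, a₂, a₃, a₄, a₆` of Weierstrass coefficients, indexed by `Fin 5` so that
denominators can be cleared and subfields generated uniformly. -/
def weierstrassCoeff {R : Type*} [CommRing R] (W : WeierstrassCurve R) : Fin 5 → R :=
  ![W.a₁, W.a₂, W.a₃, W.a₄, W.a₆]

variable {F : Type*} [Field F]

theorem exists_countable_subfield_baseChange_eq (W : WeierstrassCurve F) [W.IsElliptic] :
    ∃ (k : Subfield F) (W₀ : WeierstrassCurve k),
      Countable k ∧ W₀.IsElliptic ∧ W₀⁄F = W := by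
  let k : Subfield F := Subfield.closure (Set.range (weierstrassCoeff W))
  have hk (i : Fin 5) : weierstrassCoeff W i ∈ k := Subfield.subset_closure (Set.mem_range_self i)
  let W₀ : WeierstrassCurve k := ⟨⟨_, hk 0⟩, ⟨_, hk 1⟩, ⟨_, hk 2⟩, ⟨_, hk 3⟩, ⟨_, hk 4⟩⟩
  have hW : W₀⁄F = W := rfl
  have hcountable : #k ≤ ℵ₀ :=
    (Subfield.cardinalMk_closure_le_max _).trans
      (max_le (mk_le_aleph0_iff.mpr (Set.countable_range _)) le_rfl)
  refine ⟨k, W₀, mk_le_aleph0_iff.mp hcountable, ⟨isUnit_iff_ne_zero.mpr fun hΔ ↦ ?_⟩, hW⟩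
  exact W.isUnit_Δ.ne_zero (hW ▸ (W₀.map_Δ _).trans (by rw [hΔ, map_zero]))

theorem countable_nsmul_eq_zero [DecidableEq F] (W : Affine F) [W.IsElliptic] {n : ℕ}
    (hn : n ≠ 0) : {P : W.Point | n • P = 0}.Countable := by
  obtain ⟨k, W₀, _, _, rfl⟩ := exists_countable_subfield_baseChange_eq W
  exact countable_nsmul_eq_zero_of_prime
    (fun p hp ↦ countable_prime_nsmul_eq_zero_baseChange F hp) hn

end CountableTorsionPoints

section UncountablePoints

variable {R F : Type*} [CommRing R] (I : Ideal R) [HenselianRing R I]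

theorem exists_isUnit_cubic_root {c₁ c₂ c₃ : R} (h₁ : c₁ ∈ I) (h₂ : c₂ ∈ I) (h₃ : c₃ ∈ I) :
    ∃ u : R, IsUnit u ∧ u ^ 3 + (c₁ - 1) * u ^ 2 + c₂ * u + c₃ = 0 := by
  let f : R[X] := X ^ 3 + C (c₁ - 1) * X ^ 2 + C c₂ * X + C c₃
  have hmonic : f.Monic := by simp only [f]; monicity!
  have heval : f.eval 1 ∈ I := by
    have : f.eval 1 = c₁ + c₂ + c₃ := by simp [f]
    exact this ▸ I.add_mem (I.add_mem h₁ h₂) h₃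
  have hderiv : Ideal.Quotient.mk I (f.derivative.eval 1) = 1 := by
    rw [← map_one (Ideal.Quotient.mk I), Ideal.Quotient.eq]
    have : f.derivative.eval 1 - 1 = 2 * c₁ + c₂ := by simp [f]; ring
    exact this ▸ I.add_mem (I.mul_mem_left _ h₁) h₂
  obtain ⟨u, hroot, hu⟩ := HenselianRing.is_henselian f hmonic 1 heval (hderiv ▸ isUnit_one)
  have := isLocalHom_of_le_jacobson_bot I HenselianRing.jac
  refine ⟨u, isUnit_of_map_unit (Ideal.Quotient.mk I) u ?_, by simpa [f] using hroot⟩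
  rw [Ideal.Quotient.eq.mpr hu, map_one]
  exact isUnit_one

variable [Field F]

/-- The local parameter `-x / y` of a Weierstrass curve at its point at infinity, where it takes
the value `0`; it also takes the junk value `0` at the points with `y = 0`. -/
def localParameter {W : Affine F} : W.Point → F
  | .zero => 0
  | .some x y _ => -x / y

variable [Algebra R F] [IsFractionRing R F] (W : Affine F) [W.IsElliptic]

theorem exists_localParameter_eq {z : R}
    (hz : ∀ i, ∃ b ∈ I, algebraMap R F b = weierstrassCoeff W i * algebraMap R F z) :
    ∃ P : W.Point, localParameter P = algebraMap R F z := by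
  rcases eq_or_ne z 0 with rfl | hz0
  · exact ⟨0, (map_zero _).symm⟩
  obtain ⟨b₁, hb₁I, hb₁ : algebraMap R F b₁ = W.a₁ * _⟩ := hz 0
  obtain ⟨b₂, hb₂I, hb₂ : algebraMap R F b₂ = W.a₂ * _⟩ := hz 1
  obtain ⟨b₃, hb₃I, hb₃ : algebraMap R F b₃ = W.a₃ * _⟩ := hz 2
  obtain ⟨b₄, hb₄I, hb₄ : algebraMap R F b₄ = W.a₄ * _⟩ := hz 3
  obtain ⟨b₆, hb₆I, hb₆ : algebraMap R F b₆ = W.a₆ * _⟩ := hz 4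
  obtain ⟨u, hu, hroot⟩ := exists_isUnit_cubic_root I
    (I.add_mem hb₁I (I.mul_mem_right z hb₂I))
    (I.add_mem (I.mul_mem_right (z ^ 2) hb₃I) (I.mul_mem_right (z ^ 3) hb₄I))
    (I.mul_mem_right (z ^ 5) hb₆I)
  have hz' : algebraMap R F z ≠ 0 := by simpa using hz0
  have hu' : algebraMap R F u ≠ 0 := (hu.map _).ne_zero
  have hroot' := congrArg (algebraMap R F) hroot
  simp only [map_add, map_sub, map_mul, map_pow, map_one, map_zero, hb₁, hb₂, hb₃, hb₄, hb₆]
    at hroot'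
  refine ⟨.some (algebraMap R F u / algebraMap R F z ^ 2) (-algebraMap R F u / algebraMap R F z ^ 3)
    (equation_iff_nonsingular.mp ((equation_iff' ..).mpr ?_)), ?_⟩
  · field_simp
    linear_combination -hroot'
  · simp only [localParameter]
    field_simp

theorem uncountable_point_of_henselian [Uncountable R] (hI : I ≠ ⊥) : Uncountable W.Point := by
  obtain ⟨π, hπI, hπ⟩ := Submodule.exists_mem_ne_zero_of_ne_bot hI
  obtain ⟨d, hd⟩ := IsLocalization.exist_integer_multiples_of_finite (nonZeroDivisors R)
    (weierstrassCoeff W)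
  have hcoeff (s : R) (i : Fin 5) : ∃ b ∈ I, algebraMap R F b =
      weierstrassCoeff W i * algebraMap R F (π * d * s) := by
    obtain ⟨r, hr⟩ := hd i
    refine ⟨π * (r * s), I.mul_mem_right _ hπI, ?_⟩
    rw [map_mul, map_mul, hr, Algebra.smul_def, map_mul, map_mul]
    ring
  choose P hP using fun s ↦ exists_localParameter_eq I W (hcoeff s)
  have : IsDomain R := (IsFractionRing.injective R F).isDomain
  have hinj : Function.Injective P := fun s s' hs ↦ by
    have hz : π * d * s = π * d * s' :=
      IsFractionRing.injective R F ((hP s).symm.trans (hs ▸ hP s'))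
    exact mul_left_cancel₀ (mul_ne_zero hπ (nonZeroDivisors.coe_ne_zero d)) hz
  exact hinj.uncountable

end UncountablePoints

theorem uncountable_powerSeries (R : Type*) [Semiring R] [Nontrivial R] :
    Uncountable (PowerSeries R) := by
  rw [← aleph0_lt_mk_iff]
  change ℵ₀ < #((Unit →₀ ℕ) → R)
  rw [mk_arrow]
  simpa using cantor' ℵ₀ (one_lt_iff_nontrivial.mpr ‹Nontrivial R›)

theorem statement11_general {R F : Type*} [CommRing R] [Uncountable R] (I : Ideal R)
    [HenselianRing R I] (hI : I ≠ ⊥) [Field F] [DecidableEq F] [Algebra R F] [IsFractionRing R F]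
    (W : Affine F) [W.IsElliptic] : ℵ₀ < Module.rank ℚ (ℚ ⊗[ℤ] W.Point) := by
  have : Uncountable W.Point := uncountable_point_of_henselian I W hI
  exact aleph0_lt_rank_of_countable_torsion fun _ ↦ countable_nsmul_eq_zero W

open scoped Classical in
theorem statement11 (K : Type*) [Field K]
    (W : WeierstrassCurve.Affine (LaurentSeries K)) (hΔ : W.Δ ≠ 0) :
    Cardinal.aleph0 ≤ Module.rank ℚ (ℚ ⊗[ℤ] W.Point) := by
  have : W.IsElliptic := ⟨isUnit_iff_ne_zero.mpr hΔ⟩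
  have := uncountable_powerSeries K
  exact (statement11_general (Ideal.span {(PowerSeries.X : PowerSeries K)})
    (Ideal.span_singleton_eq_bot.not.mpr PowerSeries.X_ne_zero) W).le
end

section
/- Let $F$ be an uncountable algebraically closed field and let $W$ be an elliptic curve over $F$ (a Weierstrass curve over $F$ with nonzero discriminant). Then the rank of the group $W(F)$ of $F$-rational points of $W$ equals the cardinality of $F$, i.e. $\dim_{\mathbb{Q}}(W(F) \otimes_{\mathbb{Z}} \mathbb{Q})$ equals the cardinality of $F$. -/
open TensorProduct

/-!
An abelian group of uncountable cardinality `κ` whose torsion subgroup is countable has rank `κ`: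
modulo torsion it has the same cardinality and embeds into a rational vector space.

The torsion of an elliptic curve `W` is countable over every field. A torsion point `P` has only
finitely many multiples, so `2 ^ i • P = 2 ^ j • P` for some `i ≠ j`. Iterating the duplication
formula, the `x`-coordinate of `2 ^ k • P` is a quotient of coprime polynomials in `x(P)` whose
numerator is monic of degree `4 ^ k`. For `i ≠ j` two such quotients are different rational
functions, so they agree for only finitely many values of `x(P)`, each shared by at most two points.

Over an algebraically closed field every `x` is the `x`-coordinate of a point, so `W(F)` has the
cardinality of `F`.
-/

namespace MordellWeil

open Cardinal Polynomial WeierstrassCurve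
open scoped nonZeroDivisors

universe u v

section Rank

variable {R : Type u} {M : Type v} [CommRing R] [AddCommGroup M] [Module R M]

lemma rank_eq_mk_of_isTorsionFree [IsDomain R] [Infinite R] [Module.IsTorsionFree R M]
    (hRM : lift.{v} #R < lift.{u} #M) : Module.rank R M = #M := by
  let K := FractionRing R
  have hinj : Function.Injective (TensorProduct.mk R K M 1) :=
    (IsLocalizedModule.injective_iff_isRegular R⁰ _).2 fun s ↦
      (isRegular_iff_ne_zero.2 (nonZeroDivisors.coe_ne_zero s)).isSMulRegular
  have hle : lift.{max u v} #M ≤ lift.{v} #(K ⊗[R] M) := lift_mk_le_lift_mk_of_injective hinj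
  have hrank : Module.rank K (K ⊗[R] M) = #(K ⊗[R] M) := by
    have : Infinite K := Infinite.of_injective _ (IsFractionRing.injective R K)
    refine Module.Free.rank_eq_mk_of_infinite_lt K _ ?_
    rw [mk_fractionRing, lift_umax.{u, v}, lift_id'.{u, v}]
    rw [lift_umax.{v, u}, lift_id'.{v, u}] at hle
    exact hRM.trans_le hle
  refine le_antisymm (rank_le_card R M) (lift_le.{max u v}.1 ?_)
  rwa [← (TensorProduct.isBaseChange R M K).lift_rank_eq, hrank]

lemma mk_quotient_eq_of_mk_lt [Infinite M] {N : Submodule R M} (hN : #N < #M) :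
    #(M ⧸ N) = #M := by
  have hmul : #M = #(M ⧸ N) * #N := by
    rw [mul_def]
    exact mk_congr (AddSubgroup.addGroupEquivQuotientProdAddSubgroup (s := N.toAddSubgroup))
  refine le_antisymm (mk_le_of_surjective N.mkQ_surjective) (not_lt.1 fun hlt ↦ ?_)
  exact (mul_lt_of_lt (aleph0_le_mk M) hlt hN).ne hmul.symm

theorem rank_eq_mk_of_mk_torsion_lt [IsDomain R] [Infinite R]
    (hRM : lift.{v} #R < lift.{u} #M) (hT : #(Submodule.torsion R M) < #M) :
    Module.rank R M = #M := by
  have : Infinite M := infinite_iff.2 <| lift_le.1 <| le_trans (by simp) hRM.le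
  have hquot : #(M ⧸ Submodule.torsion R M) = #M := mk_quotient_eq_of_mk_lt hT
  rw [← rank_quotient_eq_of_le_torsion le_rfl, ← hquot]
  exact rank_eq_mk_of_isTorsionFree (by rwa [hquot])

end Rank

lemma exists_ne_nsmul_eq {G : Type*} [AddGroup G] {a : G} (ha : IsOfFinAddOrder a) (f : ℕ → ℕ) :
    ∃ i j, i ≠ j ∧ f i • a = f j • a := by
  have := (finite_multiples.2 ha).to_subtype
  obtain ⟨i, j, hij, heq⟩ := Finite.exists_ne_map_eq_of_infinite
    fun k ↦ (⟨f k • a, f k, rfl⟩ : AddSubmonoid.multiples a)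
  exact ⟨i, j, hij, congrArg Subtype.val heq⟩

section Cardinality

variable {F : Type*} [Field F] (W : Affine F)

lemma exists_nonsingular [IsAlgClosed F] [W.IsElliptic] (x : F) : ∃ y, W.Nonsingular x y := by
  have hdeg : (W.polynomial.map (evalRingHom x)).degree ≠ 0 := by
    simp [Affine.monic_polynomial.degree_map, Affine.degree_polynomial]
  obtain ⟨y, hy⟩ := IsAlgClosed.exists_root _ hdeg
  refine ⟨y, Affine.equation_iff_nonsingular.1 ?_⟩
  rwa [IsRoot, map_evalRingHom_eval] at hy

lemma mk_point_le [Infinite F] : #W.Point ≤ #F :=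
  calc #W.Point = #{xy : F × F // W.Nonsingular xy.1 xy.2} + 1 :=
        (mk_congr W.nonsingularPointEquiv).trans mk_option
    _ ≤ #(F × F) + 1 := by gcongr; exact mk_subtype_le _
    _ = #F := by simp

lemma mk_point_eq [IsAlgClosed F] [W.IsElliptic] : #W.Point = #F := by
  have : Infinite F := IsAlgClosed.instInfinite
  choose y hy using exists_nonsingular W
  refine (mk_point_le W).antisymm (mk_le_of_injective (f := fun x ↦ .some x (y x) (hy x)) ?_)
  exact fun x x' h ↦ (Affine.Point.some.inj h).1

end Cardinality

section Duplication

variable {R : Type*} [CommRing R] (W : WeierstrassCurve R)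

/-- The duplication map on `x`-coordinates in homogeneous form: if `p` represents the
`x`-coordinate `(p 0 : p 1)` of a point, with `(1 : 0)` at infinity, then `duplication W p`
represents the `x`-coordinate of its double. -/
def duplication (p : Fin 2 → R) : Fin 2 → R :=
  ![p 0 ^ 4 - W.b₄ * p 0 ^ 2 * p 1 ^ 2 - 2 * W.b₆ * p 0 * p 1 ^ 3 - W.b₈ * p 1 ^ 4,
    4 * p 0 ^ 3 * p 1 + W.b₂ * p 0 ^ 2 * p 1 ^ 2 + 2 * W.b₄ * p 0 * p 1 ^ 3 + W.b₆ * p 1 ^ 4]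

lemma duplication_smul (c : R) (p : Fin 2 → R) :
    duplication W (c • p) = c ^ 4 • duplication W p := by
  ext i
  fin_cases i <;> simp [duplication] <;> ring

lemma comp_duplication {S : Type*} [CommRing S] (f : R →+* S) (p : Fin 2 → R) :
    f ∘ duplication W p = duplication (W.map f) (f ∘ p) := by
  ext i
  fin_cases i <;> simp [duplication, map_ofNat]

/- On the symmetric coordinates of a pair `(p, p)`, `addSubMap` returns those of the pair formed
by the double and the point at infinity. -/
lemma addSubMap_eval_eq_duplication (p : Fin 2 → R) :
    (fun i ↦ (W.addSubMap i).eval ![p 0 ^ 2, 2 * p 0 * p 1, p 1 ^ 2]) =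
      ![duplication W p 0, duplication W p 1, 0] := by
  ext i
  fin_cases i <;> simp [addSubMap, duplication] <;> ring

lemma pow_four_mem_span_duplication [W.IsElliptic] (p : Fin 2 → R) (i : Fin 3) :
    ![p 0 ^ 2, 2 * p 0 * p 1, p 1 ^ 2] i ^ 4 ∈
      Ideal.span {duplication W p 0, duplication W p 1} := by
  have h := congrFun (addSubMap_eval_eq_duplication W p)
  rw [← addSubMapCoeff_condition W _ i, Fin.sum_univ_three, h 0, h 1, h 2]
  simp only [Matrix.cons_val_zero, Matrix.cons_val_one, Matrix.cons_val, mul_zero, add_zero]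
  exact Ideal.mem_span_pair.2 ⟨_, _, rfl⟩

lemma isCoprime_duplication [W.IsElliptic] {p : Fin 2 → R} (hp : IsCoprime (p 0) (p 1)) :
    IsCoprime (duplication W p 0) (duplication W p 1) := by
  obtain ⟨u, v, huv⟩ : IsCoprime ((p 0 ^ 2) ^ 4) ((p 1 ^ 2) ^ 4) := hp.pow.pow
  rw [IsCoprime, ← Ideal.mem_span_pair, ← huv]
  exact add_mem (Ideal.mul_mem_left _ u (pow_four_mem_span_duplication W p 0))
    (Ideal.mul_mem_left _ v (pow_four_mem_span_duplication W p 2))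

end Duplication

section Degree

variable {R : Type*} [CommRing R]

lemma natDegree_C_mul_pow_mul_pow_lt {p q : R[X]} {n : ℕ} (hp : p.natDegree ≤ n)
    (hq : q.natDegree < n) (c : R) (i : ℕ) {j : ℕ} (hj : j ≠ 0) :
    (C c * p ^ i * q ^ j).natDegree < n * (i + j) :=
  calc (C c * p ^ i * q ^ j).natDegree
      ≤ i * n + j * q.natDegree := natDegree_mul_le_of_le
        ((natDegree_C_mul_le _ _).trans (natDegree_pow_le_of_le i hp)) natDegree_pow_le
    _ < i * n + j * n := by gcongr
    _ = n * (i + j) := by ring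

lemma natDegree_quartic_form_lt {p q : R[X]} {n : ℕ} (hp : p.natDegree ≤ n)
    (hq : q.natDegree < n) (a b c d : R) :
    (C a * p ^ 3 * q ^ 1 + C b * p ^ 2 * q ^ 2 + C c * p ^ 1 * q ^ 3 +
      C d * p ^ 0 * q ^ 4).natDegree < n * 4 := by
  have hterm (e : R) (i : ℕ) {j : ℕ} (hj : j ≠ 0) :
      (C e * p ^ i * q ^ j).natDegree < n * (i + j) := natDegree_C_mul_pow_mul_pow_lt hp hq e i hj
  have add_lt {f g : R[X]} (hf : f.natDegree < n * 4) (hg : g.natDegree < n * 4) :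
      (f + g).natDegree < n * 4 := (natDegree_add_le f g).trans_lt (max_lt hf hg)
  exact add_lt (add_lt (add_lt (hterm a 3 one_ne_zero) (hterm b 2 two_ne_zero))
    (hterm c 1 three_ne_zero)) (hterm d 0 four_ne_zero)

variable (W : WeierstrassCurve R) {p : Fin 2 → R[X]} {n : ℕ}

lemma isMonicOfDegree_duplication_zero (hp : IsMonicOfDegree (p 0) n) (hlt : (p 1).natDegree < n) :
    IsMonicOfDegree (duplication (W.map C) p 0) (n * 4) := by
  have hsub : duplication (W.map C) p 0 = p 0 ^ 4 - (C 0 * p 0 ^ 3 * p 1 ^ 1 +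
      C W.b₄ * p 0 ^ 2 * p 1 ^ 2 + C (2 * W.b₆) * p 0 ^ 1 * p 1 ^ 3 +
        C W.b₈ * p 0 ^ 0 * p 1 ^ 4) := by
    simp [duplication, map_ofNat, sub_sub, add_assoc]
  rw [hsub]
  exact (hp.pow 4).sub (natDegree_quartic_form_lt hp.natDegree_eq.le hlt _ _ _ _)

lemma natDegree_duplication_one_lt (hp : (p 0).natDegree ≤ n) (hlt : (p 1).natDegree < n) :
    (duplication (W.map C) p 1).natDegree < n * 4 := by
  have hsum : duplication (W.map C) p 1 = C 4 * p 0 ^ 3 * p 1 ^ 1 + C W.b₂ * p 0 ^ 2 * p 1 ^ 2 +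
      C (2 * W.b₄) * p 0 ^ 1 * p 1 ^ 3 + C W.b₆ * p 0 ^ 0 * p 1 ^ 4 := by
    simp [duplication, map_ofNat]
  rw [hsum]
  exact natDegree_quartic_form_lt hp hlt _ _ _ _

end Degree

section DuplicationIterate

variable {R : Type*} [CommRing R] (W : WeierstrassCurve R)

/-- The homogeneous coordinates, as polynomials in `X = x(P)`, of the `x`-coordinate of
`2 ^ k • P` for a generic point `P` of `W`. -/
noncomputable def duplicationIterate (k : ℕ) : Fin 2 → R[X] :=
  (duplication (W.map C))^[k] ![X, 1]

lemma duplicationIterate_succ (k : ℕ) :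
    duplicationIterate W (k + 1) = duplication (W.map C) (duplicationIterate W k) :=
  Function.iterate_succ_apply' ..

lemma eval_comp_duplicationIterate (x : R) (k : ℕ) :
    eval x ∘ duplicationIterate W k = (duplication W)^[k] ![x, 1] := by
  induction k with
  | zero => ext i; fin_cases i <;> simp [duplicationIterate]
  | succ k ih =>
    have hmap : (W.map C).map (evalRingHom x) = W := by
      have hid : (evalRingHom x).comp C = RingHom.id R := by ext; simp
      rw [WeierstrassCurve.map_map, hid, WeierstrassCurve.map_id]
    have hcomp := comp_duplication (W.map C) (evalRingHom x) (duplicationIterate W k)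
    rw [hmap, coe_evalRingHom, ih] at hcomp
    rw [duplicationIterate_succ, hcomp, Function.iterate_succ_apply']

lemma isCoprime_duplicationIterate [W.IsElliptic] (k : ℕ) :
    IsCoprime (duplicationIterate W k 0) (duplicationIterate W k 1) := by
  induction k with
  | zero => exact isCoprime_one_right
  | succ k ih => exact duplicationIterate_succ W k ▸ isCoprime_duplication _ ih

lemma isMonicOfDegree_duplicationIterate_zero_and_natDegree_one_lt [Nontrivial R] (k : ℕ) :
    IsMonicOfDegree (duplicationIterate W k 0) (4 ^ k) ∧
      (duplicationIterate W k 1).natDegree < 4 ^ k := by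
  induction k with
  | zero => exact ⟨isMonicOfDegree_X R, by simp [duplicationIterate]⟩
  | succ k ih =>
    rw [duplicationIterate_succ, pow_succ]
    exact ⟨isMonicOfDegree_duplication_zero W ih.1 ih.2,
      natDegree_duplication_one_lt W ih.1.natDegree_eq.le ih.2⟩

lemma duplicationIterate_cross_ne [IsDomain R] [W.IsElliptic] {i j : ℕ} (hij : i ≠ j) :
    duplicationIterate W i 0 * duplicationIterate W j 1 ≠
      duplicationIterate W j 0 * duplicationIterate W i 1 := by
  intro heq
  have hi := (isMonicOfDegree_duplicationIterate_zero_and_natDegree_one_lt W i).1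
  have hj := (isMonicOfDegree_duplicationIterate_zero_and_natDegree_one_lt W j).1
  have hdvd : duplicationIterate W i 0 ∣ duplicationIterate W j 0 :=
    (isCoprime_duplicationIterate W i).dvd_of_dvd_mul_right ⟨_, heq.symm⟩
  have hdvd' : duplicationIterate W j 0 ∣ duplicationIterate W i 0 :=
    (isCoprime_duplicationIterate W j).dvd_of_dvd_mul_right ⟨_, heq⟩
  have hzero : duplicationIterate W i 0 = duplicationIterate W j 0 :=
    eq_of_monic_of_associated hi.monic hj.monic (associated_of_dvd_dvd hdvd hdvd')
  have hpow : 4 ^ i = 4 ^ j := by rw [← hi.natDegree_eq, hzero, hj.natDegree_eq]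
  exact hij (Nat.pow_right_injective (by simp) hpow)

end DuplicationIterate

section XCoordinate

variable {F : Type*} [Field F] {W : Affine F}

lemma finite_preimage_xRep {s : Set (Fin 2 → F)} (hs : s.Finite) :
    (Affine.Point.xRep ⁻¹' s : Set W.Point).Finite := by
  refine hs.preimage' fun b _ ↦ ?_
  obtain hempty | ⟨P, rfl⟩ := (Affine.Point.xRep ⁻¹' {b} : Set W.Point).eq_empty_or_nonempty
  · exact hempty ▸ Set.finite_empty
  · exact (Set.toFinite {P, -P}).subset fun Q hQ ↦ Affine.Point.eq_or_eq_neg_of_xRep_eq_xRep hQ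

variable [DecidableEq F]

lemma exists_duplication_xRep_eq_smul (P : W.Point) :
    ∃ c : F, duplication W P.xRep = c • (P + P).xRep := by
  match P with
  | 0 => exact ⟨1, by simp [duplication]⟩
  | .some x y h =>
    have heq := (W.equation_iff x y).1 h.1
    have hden : duplication W ![x, 1] 1 = (y - W.negY x y) ^ 2 := by
      simp only [duplication, b₂, b₄, b₆, Affine.negY, Matrix.cons_val_zero, Matrix.cons_val_one]
      linear_combination -4 * heq
    rw [Affine.Point.xRep_some]
    by_cases hy : y = W.negY x y
    · refine ⟨duplication W ![x, 1] 0, ?_⟩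
      rw [Affine.Point.add_self_of_Y_eq hy]
      have hden_zero : duplication W ![x, 1] 1 = 0 := by rw [hden, ← hy, sub_self, sq, zero_mul]
      ext i
      fin_cases i <;> simp [hden_zero]
    · have hne : y - W.negY x y ≠ 0 := sub_ne_zero.2 hy
      have hnum : duplication W ![x, 1] 0 =
          (y - W.negY x y) ^ 2 * W.addX x x (W.slope x x y y) := by
        rw [Affine.slope_of_Y_ne rfl hy, Affine.addX]
        field_simp
        simp only [duplication, b₄, b₆, b₈, Affine.negY, Matrix.cons_val_zero, Matrix.cons_val_one]
        linear_combination (8 * x + W.a₁ ^ 2 + 4 * W.a₂) * heq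
      refine ⟨(y - W.negY x y) ^ 2, ?_⟩
      rw [Affine.Point.add_self_of_Y_ne hy, Affine.Point.xRep_some]
      ext i
      fin_cases i <;> simp [hnum, hden]

lemma exists_duplication_iterate_xRep_eq_smul (P : W.Point) (k : ℕ) :
    ∃ c : F, (duplication W)^[k] P.xRep = c • (2 ^ k • P).xRep := by
  induction k with
  | zero => exact ⟨1, by simp⟩
  | succ k ih =>
    obtain ⟨c, hc⟩ := ih
    obtain ⟨d, hd⟩ := exists_duplication_xRep_eq_smul (2 ^ k • P)
    refine ⟨c ^ 4 * d, ?_⟩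
    rw [Function.iterate_succ_apply', hc, duplication_smul, hd, smul_smul, pow_succ 2,
      mul_two, add_nsmul]

end XCoordinate

section Torsion

variable {F : Type*} [Field F] [DecidableEq F] (W : Affine F) [W.IsElliptic]

lemma finite_setOf_two_pow_nsmul_eq {i j : ℕ} (hij : i ≠ j) :
    {P : W.Point | 2 ^ i • P = 2 ^ j • P}.Finite := by
  let q := duplicationIterate W i 0 * duplicationIterate W j 1 -
    duplicationIterate W j 0 * duplicationIterate W i 1
  have hq : q ≠ 0 := sub_ne_zero.2 (duplicationIterate_cross_ne W hij)
  refine ((finite_preimage_xRep ((finite_setOfPred_isRoot hq).image (![·, 1]))).insert 0).subset ?_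
  rintro (_ | ⟨x, y, h⟩) (hP : _ = _)
  · exact Set.mem_insert ..
  refine Set.mem_insert_of_mem _ ⟨x, ?_, rfl⟩
  obtain ⟨c, hc⟩ := exists_duplication_iterate_xRep_eq_smul (.some x y h) i
  obtain ⟨d, hd⟩ := exists_duplication_iterate_xRep_eq_smul (.some x y h) j
  rw [Affine.Point.xRep_some, ← eval_comp_duplicationIterate] at hc hd
  have hi (l : Fin 2) : (duplicationIterate W i l).eval x = _ := congrFun hc l
  have hj (l : Fin 2) : (duplicationIterate W j l).eval x = _ := congrFun hd l
  simp only [Set.mem_ofPred_eq, IsRoot, q, eval_sub, eval_mul, hi, hj, hP, Pi.smul_apply,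
    smul_eq_mul]
  ring

lemma countable_torsion : Countable (Submodule.torsion ℤ W.Point) := by
  have hcountable : (⋃ ij ∈ {ij : ℕ × ℕ | ij.1 ≠ ij.2},
      {P : W.Point | 2 ^ ij.1 • P = 2 ^ ij.2 • P}).Countable :=
    (Set.to_countable _).biUnion fun _ hij ↦ (finite_setOf_two_pow_nsmul_eq W hij).countable
  refine (hcountable.mono fun P hP ↦ ?_).to_subtype
  have hfin : IsOfFinAddOrder P := (SetLike.ext_iff.1 Submodule.torsion_int P).1 hP
  obtain ⟨i, j, hij, heq⟩ := exists_ne_nsmul_eq hfin (2 ^ ·)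
  exact Set.mem_biUnion (x := (i, j)) hij heq

end Torsion

end MordellWeil

open Cardinal MordellWeil

theorem statement12_general {F : Type*} [Field F] [DecidableEq F]
    (W : WeierstrassCurve.Affine F) [Uncountable W.Point] (hΔ : W.Δ ≠ 0) :
    Module.rank ℚ (ℚ ⊗[ℤ] W.Point) = #W.Point := by
  have : W.IsElliptic := ⟨hΔ.isUnit⟩
  have hlt : ℵ₀ < #W.Point := aleph0_lt_mk
  rw [(TensorProduct.isBaseChange ℤ W.Point ℚ).rank_eq]
  refine rank_eq_mk_of_mk_torsion_lt (by simp) ?_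
  exact (mk_le_aleph0_iff.2 (countable_torsion W)).trans_lt hlt

open scoped Classical in
theorem statement12 (F : Type*) [Field F] [IsAlgClosed F] [Uncountable F]
    (W : WeierstrassCurve.Affine F) (hΔ : W.Δ ≠ 0) :
    Module.rank ℚ (ℚ ⊗[ℤ] W.Point) = Cardinal.mk F := by
  have : W.IsElliptic := ⟨hΔ.isUnit⟩
  have hmk : #W.Point = #F := mk_point_eq W
  have : Uncountable W.Point := aleph0_lt_mk_iff.1 (hmk ▸ aleph0_lt_mk)
  rw [statement12_general W hΔ, hmk]
end
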